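/- arXiv:1210.2610 — 5 statements merged into one kernel-verified Lean document; each statement's English description precedes it below -/
import Mathlib

section
/- For every natural number n, the polynomial P_n has degree exactly n+1. -/
/-!
The coefficient of `X ^ (n + 1)` in `P n` obeys the Catalan recursion: in `P (n + 1)`, the shifted
term `P n (X + 1)` has degree at most `n + 1`, so it contributes nothing to `X ^ (n + 2)`, while each
product `P i * P (n - i)` contributes the product of the two leading coefficients. Strong induction
thus gives both the degree bound and the positivity of that coefficient, since a nonempty sum of
products of positive integers cannot cancel.
-/

/-- The polynomials `P n` with `P 0 = X` and
`P (n+1) (X) = P n (X+1) + ∑ i ≤ n, P i * P (n-i)`. -/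
noncomputable def P : ℕ → Polynomial ℤ
  | 0 => Polynomial.X
  | n+1 => (P n).comp (Polynomial.X + 1)
      + ∑ i ∈ (Finset.range (n+1)).attach, P i.1 * P (n - i.1)
termination_by n => n
decreasing_by
  · exact Nat.lt_succ_self n
  · exact Finset.mem_range.mp i.2
  · exact Nat.lt_succ_of_le (Nat.sub_le n i.1)

/-- The degree bound and the positivity of the top coefficient, proved together because the
coefficient of a product is read off from the degree bounds of its factors. -/
theorem P_natDegree_le_and_coeff_pos (n : ℕ) :
    (P n).natDegree ≤ n + 1 ∧ 0 < (P n).coeff (n + 1) := by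
  induction n using Nat.strong_induction_on with
  | _ n ih =>
    cases n with
    | zero => rw [P]; simp
    | succ n =>
      have hcomp : ((P n).comp (Polynomial.X + 1)).natDegree ≤ n + 1 := by
        have hX : (Polynomial.X + 1 : Polynomial ℤ).natDegree = 1 :=
          Polynomial.natDegree_X_add_C 1
        rw [Polynomial.natDegree_comp, hX, mul_one]
        exact (ih n n.lt_succ_self).1
      rw [P]
      constructor
      · refine Polynomial.natDegree_add_le_of_degree_le (hcomp.trans (by omega))
          (Polynomial.natDegree_sum_le_of_forall_le _ _ fun i _ => ?_)
        have hi := Finset.mem_range.mp i.2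
        exact (Polynomial.natDegree_mul_le_of_le (ih i.1 hi).1 (ih (n - i.1) (by omega)).1).trans
          (by omega)
      · rw [Polynomial.coeff_add, Polynomial.coeff_eq_zero_of_natDegree_lt (by omega), zero_add,
          Polynomial.finsetSum_coeff]
        refine Finset.sum_pos (fun i _ => ?_) (by simp)
        have hi := Finset.mem_range.mp i.2
        have hdeg : n + 1 + 1 = (i.1 + 1) + (n - i.1 + 1) := by omega
        rw [hdeg, Polynomial.coeff_mul_add_eq_of_natDegree_le (ih i.1 hi).1 (ih (n - i.1) (by omega)).1]
        exact mul_pos (ih i.1 hi).2 (ih (n - i.1) (by omega)).2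

/-- For every natural number `n`, the polynomial `P n` has degree exactly `n+1`. -/
theorem P_degree (n : ℕ) : (P n).degree = (n + 1 : ℕ) := by
  obtain ⟨hle, hpos⟩ := P_natDegree_le_and_coeff_pos n
  exact Polynomial.degree_eq_of_le_of_coeff_ne_zero (Polynomial.degree_le_of_natDegree_le hle)
    hpos.ne'
end

section
/- Let p(i,n) denote the coefficient of X^{n+2−i} in P_n when i ≤ n+2, and p(i,n) = 0 when i > n+2, so that P_n(X) = p(1,n)·X^{n+1} + p(2,n)·X^{n} + ⋯ + p(n+1,n)·X + p(n+2,n). Then p(1,0) = 1, p(i,0) = 0 for i > 1, and for all n ≥ 0 and i ≥ 1: p(i,n+1) = ∑_{j=0}^{i−2} C(n+1−j, i−2−j)·p(j+1,n) + ∑_{k=1}^{i} ∑_{j=0}^{n} p(k,j)·p(i+1−k, n−j), where C(a,b) denotes the binomial coefficient. -/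
/-- `p i n` is the coefficient of `X^(n+2-i)` in `P n` for `i ≤ n+2`, and `0` otherwise. -/
noncomputable def p (i n : ℕ) : ℤ := if i ≤ n + 2 then (P n).coeff (n + 2 - i) else 0

open Polynomial in
lemma P_zero : P 0 = X := by rw [P]

open Polynomial in
lemma P_succ (n : ℕ) : P (n + 1) =
    (P n).comp (X + 1) + ∑ j ∈ Finset.range (n + 1), P j * P (n - j) := by
  rw [P, Finset.sum_attach (Finset.range (n + 1)) (fun j => P j * P (n - j))]

lemma natDegree_P_le (n : ℕ) : (P n).natDegree ≤ n + 1 := by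
  induction n using Nat.strong_induction_on with
  | _ n ih =>
    cases n with
    | zero => rw [P_zero]; simp
    | succ n =>
      rw [P_succ]
      refine Polynomial.natDegree_add_le_of_degree_le ?_ ?_
      · refine Polynomial.natDegree_comp_le.trans ?_
        have h1 : (Polynomial.X + 1 : Polynomial ℤ).natDegree = 1 :=
          Polynomial.natDegree_X_add_C (1 : ℤ)
        rw [h1]
        have := ih n (by omega)
        omega
      · refine Polynomial.natDegree_sum_le_of_forall_le _ _ fun j hj => ?_
        have hj := Finset.mem_range.mp hj
        refine Polynomial.natDegree_mul_le.trans ?_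
        have h1 := ih j (by omega)
        have h2 := ih (n - j) (by omega)
        omega

lemma coeff_P_eq_zero {n d : ℕ} (h : n + 1 < d) : (P n).coeff d = 0 :=
  Polynomial.coeff_eq_zero_of_natDegree_lt ((natDegree_P_le n).trans_lt h)

lemma p_eq_coeff_reflect (i n : ℕ) : p i n = (Polynomial.reflect (n + 2) (P n)).coeff i := by
  rw [p, Polynomial.coeff_reflect]
  split_ifs with h
  · rw [Polynomial.revAt_le h]
  · rw [Polynomial.revAt_eq_self_of_lt (by omega), coeff_P_eq_zero (by omega)]

lemma p_zero_left (n : ℕ) : p 0 n = 0 := by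
  rw [p, if_pos (by omega), coeff_P_eq_zero (by omega)]

lemma p_eq_zero {i n : ℕ} (h : n + 2 < i) : p i n = 0 := by
  rw [p, if_neg (by omega)]

/-- Contribution of one product to the recurrence. The reflection has order
`n + 4 = (j + 2) + (n - j + 2)`, one more than the order `n + 3` used for `P (n + 1)`; hence the
index `i + 1`. -/
lemma coeff_reflect_mul {n j : ℕ} (hj : j ≤ n) (i : ℕ) :
    (Polynomial.reflect (n + 4) (P j * P (n - j))).coeff (i + 1) =
      ∑ k ∈ Finset.Icc 1 i, p k j * p (i + 1 - k) (n - j) := by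
  have h : n + 4 = (j + 2) + (n - j + 2) := by omega
  rw [h, Polynomial.reflect_mul _ _ ((natDegree_P_le j).trans (by omega))
    ((natDegree_P_le (n - j)).trans (by omega)), Polynomial.coeff_mul]
  simp only [← p_eq_coeff_reflect]
  rw [Finset.Nat.sum_antidiagonal_eq_sum_range_succ (fun a b => p a j * p b (n - j)),
    Finset.sum_range_succ, Nat.sub_self, p_zero_left, mul_zero, add_zero]
  symm
  refine Finset.sum_subset ?_ ?_
  · intro k hk
    simp only [Finset.mem_Icc, Finset.mem_range] at hk ⊢
    omega
  · intro k hk hk'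
    simp only [Finset.mem_Icc, Finset.mem_range] at hk hk'
    obtain rfl : k = 0 := by omega
    rw [p_zero_left, zero_mul]

open Polynomial in
lemma P_eq_sum (n : ℕ) :
    P n = ∑ j ∈ Finset.range (n + 2), C (p (j + 1) n) * X ^ (n + 1 - j) := by
  conv_lhs => rw [(P n).as_sum_range_C_mul_X_pow' (n := n + 2)
    (by have := natDegree_P_le n; omega)]
  rw [← Finset.sum_range_reflect]
  refine Finset.sum_congr rfl fun j hj => ?_
  have hj := Finset.mem_range.mp hj
  rw [p, if_pos (by omega), show n + 2 - 1 - j = n + 1 - j by omega,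
    show n + 2 - (j + 1) = n + 1 - j by omega]

open Polynomial in
lemma coeff_comp (n d : ℕ) : ((P n).comp (X + 1)).coeff d =
    ∑ j ∈ Finset.range (n + 2), (Nat.choose (n + 1 - j) d : ℤ) * p (j + 1) n := by
  conv_lhs => rw [P_eq_sum]
  rw [Polynomial.sum_comp, finsetSum_coeff]
  refine Finset.sum_congr rfl fun j _ => ?_
  rw [mul_comp, C_comp, X_pow_comp, coeff_C_mul, coeff_X_add_one_pow, mul_comm]

lemma sum_choose_eq {n i : ℕ} (hi : 1 ≤ i) (hin : i ≤ n + 3) :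
    ∑ j ∈ Finset.range (i - 1), (Nat.choose (n + 1 - j) (i - 2 - j) : ℤ) * p (j + 1) n =
      ∑ j ∈ Finset.range (n + 2), (Nat.choose (n + 1 - j) (n + 3 - i) : ℤ) * p (j + 1) n := by
  rw [← Finset.sum_subset (s₁ := Finset.range (i - 1)) (s₂ := Finset.range (n + 2))
    (Finset.range_subset_range.mpr (by omega))]
  · refine Finset.sum_congr rfl fun j hj => ?_
    have hj := Finset.mem_range.mp hj
    rw [Nat.choose_symm_of_eq_add (show n + 1 - j = (i - 2 - j) + (n + 3 - i) by omega)]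
  · intro j hj hj'
    simp only [Finset.mem_range] at hj hj'
    rw [Nat.choose_eq_zero_of_lt (by omega), Nat.cast_zero, zero_mul]

/-- The recurrence satisfied by the coefficients `p i n` of the polynomials `P n`. -/
theorem p_recurrence :
    p 1 0 = 1 ∧ (∀ i : ℕ, 1 < i → p i 0 = 0) ∧
    ∀ (n i : ℕ), 1 ≤ i →
      p i (n+1) =
        (∑ j ∈ Finset.range (i-1), (Nat.choose (n+1-j) (i-2-j) : ℤ) * p (j+1) n)
        + ∑ k ∈ Finset.Icc 1 i, ∑ j ∈ Finset.range (n+1), p k j * p (i+1-k) (n-j) := by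
  refine ⟨by simp [p, P_zero], fun i hi => ?_, fun n i hi => ?_⟩
  · rw [p, P_zero]
    split_ifs with h
    · rw [Polynomial.coeff_X, if_neg (by omega)]
    · rfl
  by_cases hin : i ≤ n + 3
  · rw [p, if_pos (by omega), P_succ, Polynomial.coeff_add, Polynomial.finsetSum_coeff,
      show n + 1 + 2 - i = n + 3 - i by omega, coeff_comp, sum_choose_eq hi hin,
      Finset.sum_comm]
    congr 1
    refine Finset.sum_congr rfl fun j hj => ?_
    have hj := Finset.mem_range.mp hj
    rw [← coeff_reflect_mul (by omega), Polynomial.coeff_reflect,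
      Polynomial.revAt_le (by omega), show n + 4 - (i + 1) = n + 3 - i by omega]
  -- Beyond the range of coefficients, every summand on the right vanishes.
  · rw [p_eq_zero (by omega), Finset.sum_eq_zero, Finset.sum_eq_zero, add_zero]
    · intro k hk
      refine Finset.sum_eq_zero fun j hj => ?_
      simp only [Finset.mem_Icc, Finset.mem_range] at hk hj
      rcases le_or_gt k (j + 2) with h | h
      · rw [p_eq_zero (i := i + 1 - k) (by omega), mul_zero]
      · rw [p_eq_zero h, zero_mul]
    · intro j _
      rcases le_or_gt j (n + 1) with h | h
      · rw [Nat.choose_eq_zero_of_lt (by omega), Nat.cast_zero, zero_mul]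
      · rw [p_eq_zero (i := j + 1) (by omega), mul_zero]
end

section
/- For all natural numbers n and m, T(n,m) = ∑_{i=0}^{n+1} c(n,i)·m^i. -/
/-!
For fixed `n`, form the polynomial `∑ i ≤ n + 1, c n i * X ^ i` over `ℕ`. Since `c n` vanishes
beyond degree `n + 1`, its `i`-th coefficient is `c n i` for every `i`, so the recurrence for `c`,
read coefficientwise, says `P (n + 1) = P n (X + 1) + ∑ P k * P (n - k)`: the binomial sum is the
substitution `X ↦ X + 1` and the convolution is the product (`cPoly_succ`). Evaluating at `m`
gives the recurrence for `T`, and both agree at `n = 0`.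
-/

/-- `T n m` counts λ-terms of size `n` with at most `m` distinct free de Bruijn indices. -/
def T : ℕ → ℕ → ℕ
  | 0, m => m
  | n+1, m => T n (m+1) + ∑ i ∈ (Finset.range (n+1)).attach, T i.1 m * T (n - i.1) m
termination_by n _ => n
decreasing_by
  · exact Nat.lt_succ_self n
  · exact Finset.mem_range.mp i.2
  · exact Nat.lt_succ_of_le (Nat.sub_le n i.1)

/-- `c n i` counts `i`-contexts (closed λ-terms with `i` holes) of size `n`. -/
def c : ℕ → ℕ → ℕ
  | 0, i => if i = 1 then 1 else 0
  | n+1, i => (∑ j ∈ Finset.Icc i (n+1), Nat.choose j i * c n j)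
      + ∑ j ∈ Finset.range (i+1), ∑ k ∈ (Finset.range (n+1)).attach,
          c k.1 j * c (n - k.1) (i - j)
termination_by n _ => n
decreasing_by
  · exact Nat.lt_succ_self n
  · exact Finset.mem_range.mp k.2
  · exact Nat.lt_succ_of_le (Nat.sub_le n k.1)

open Finset Polynomial in
/-- The polynomial `∑ i ≤ n + 1, c n i * X ^ i` generating the numbers of contexts of size `n`. -/
noncomputable def cPoly (n : ℕ) : Polynomial ℕ :=
  ∑ i ∈ range (n + 2), Polynomial.C (c n i) * X ^ i

lemma T_succ (n m : ℕ) :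
    T (n + 1) m = T n (m + 1) + ∑ i ∈ Finset.range (n + 1), T i m * T (n - i) m := by
  rw [T, Finset.sum_attach (Finset.range (n + 1)) (fun i => T i m * T (n - i) m)]

lemma c_succ (n i : ℕ) :
    c (n + 1) i = (∑ j ∈ Finset.Icc i (n + 1), Nat.choose j i * c n j)
      + ∑ j ∈ Finset.range (i + 1), ∑ k ∈ Finset.range (n + 1), c k j * c (n - k) (i - j) := by
  rw [c]
  congr 1
  refine Finset.sum_congr rfl fun j _ => ?_
  exact Finset.sum_attach (Finset.range (n + 1)) (fun k => c k j * c (n - k) (i - j))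

/-- A context of size `n` has at most `n + 1` holes: an abstraction does not increase the number
of holes, and an application of contexts of sizes `k` and `n - k` has at most
`(k + 1) + (n - k + 1) = (n + 1) + 1` of them. -/
lemma c_eq_zero (n : ℕ) : ∀ i, n + 2 ≤ i → c n i = 0 := by
  induction n using Nat.strong_induction_on with
  | _ n ih =>
    intro i hi
    cases n with
    | zero => rw [c, if_neg (by omega)]
    | succ n =>
      rw [c_succ, Finset.Icc_eq_empty (by omega), Finset.sum_empty, zero_add]
      refine Finset.sum_eq_zero fun j hj => Finset.sum_eq_zero fun k hk => ?_
      rw [Finset.mem_range] at hj hk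
      by_cases h : k + 2 ≤ j
      · rw [ih k (by omega) j h, zero_mul]
      · rw [ih (n - k) (by omega) (i - j) (by omega), mul_zero]

lemma coeff_cPoly (n i : ℕ) : (cPoly n).coeff i = c n i := by
  simp only [cPoly, Polynomial.finsetSum_coeff, Polynomial.coeff_C_mul_X_pow]
  rw [Finset.sum_ite_eq]
  split_ifs with h
  · rfl
  · exact (c_eq_zero n i (by simpa using h)).symm

lemma eval_cPoly (n m : ℕ) :
    (cPoly n).eval m = ∑ i ∈ Finset.range (n + 2), c n i * m ^ i := by
  simp [cPoly, Polynomial.eval_finsetSum]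

open Polynomial in
/-- The recurrence for `c` as an identity of polynomials. It has the shape of the recurrence
for `T`, with `m ↦ m + 1` replaced by the substitution `X ↦ X + 1`. -/
lemma cPoly_succ (n : ℕ) :
    cPoly (n + 1) = (cPoly n).comp (X + 1)
      + ∑ k ∈ Finset.range (n + 1), cPoly k * cPoly (n - k) := by
  ext i
  rw [coeff_cPoly, c_succ, coeff_add, finsetSum_coeff]
  congr 1
  · simp only [cPoly, Polynomial.sum_comp, mul_comp, C_comp, pow_comp, X_comp, finsetSum_coeff,
      coeff_C_mul, coeff_X_add_one_pow, Nat.cast_id]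
    -- The terms with `j < i` missing from `Icc i (n + 1)` have `Nat.choose j i = 0`.
    have hsub : Finset.Icc i (n + 1) ⊆ Finset.range (n + 2) := by
      intro j hj
      simp only [Finset.mem_Icc, Finset.mem_range] at hj ⊢
      omega
    rw [← Finset.sum_subset hsub]
    · exact Finset.sum_congr rfl fun j _ => mul_comm _ _
    · intro j hj hj'
      simp only [Finset.mem_Icc, Finset.mem_range] at hj hj'
      rw [Nat.choose_eq_zero_of_lt (by omega), mul_zero]
  · rw [Finset.sum_comm]
    refine Finset.sum_congr rfl fun k _ => ?_
    rw [coeff_mul, Finset.Nat.sum_antidiagonal_eq_sum_range_succ_mk]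
    simp only [coeff_cPoly]

lemma T_eq_eval_cPoly (n : ℕ) : ∀ m, T n m = (cPoly n).eval m := by
  induction n using Nat.strong_induction_on with
  | _ n ih =>
    intro m
    cases n with
    | zero => simp [T, eval_cPoly, c]
    | succ n =>
      rw [T_succ, cPoly_succ, Polynomial.eval_add, Polynomial.eval_comp,
        Polynomial.eval_finsetSum, ih n (by omega)]
      congr 1
      · simp
      · refine Finset.sum_congr rfl fun k hk => ?_
        rw [Finset.mem_range] at hk
        rw [Polynomial.eval_mul, ih k (by omega), ih (n - k) (by omega)]

/-- `T n m = ∑_{i=0}^{n+1} c n i * m^i`. -/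
theorem T_eq_sum_c (n m : ℕ) : T n m = ∑ i ∈ Finset.range (n+2), c n i * m ^ i := by
  rw [T_eq_eval_cPoly, eval_cPoly]
end

section
/- For all natural numbers n and m, T(n,m) = ∑_{i=0}^{m} C(m,i)·f(n,i). -/
/-- `f n m` counts λ-terms of size `n` with exactly `m` distinct free variables. -/
def f : ℕ → ℕ → ℕ
  | 0, m => if m = 1 then 1 else 0
  | n+1, m => f n m + f n (m+1) +
      ∑ p ∈ (Finset.range (n+1)).attach, ∑ c ∈ Finset.range (m+1),
        ∑ k ∈ Finset.range (m - c + 1),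
          Nat.choose m c * Nat.choose (m - c) k * f p.1 (k + c) * f (n - p.1) (m - k)
termination_by n _ => n
decreasing_by
  · exact Nat.lt_succ_self n
  · exact Nat.lt_succ_self n
  · exact Finset.mem_range.mp p.2
  · exact Nat.lt_succ_of_le (Nat.sub_le n p.1)

/-- The binomially weighted sum of `g k j` over `k + j = n`. -/
def binSum (g : ℕ → ℕ → ℕ) (n : ℕ) : ℕ :=
  ∑ k ∈ Finset.range (n + 1), n.choose k * g k (n - k)

/-- Pascal's rule, summed. -/
lemma binSum_succ (g : ℕ → ℕ → ℕ) (n : ℕ) :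
    binSum g (n + 1) = binSum (fun k j => g k (j + 1)) n + binSum (fun k j => g (k + 1) j) n := by
  have h := Finset.sum_choose_succ_mul (R := ℕ) g n
  simp only [Nat.cast_id] at h
  unfold binSum
  rw [h]
  congr 1
  refine Finset.sum_congr rfl fun k hk => ?_
  rw [Nat.sub_add_comm (Finset.mem_range_succ_iff.mp hk)]

lemma binSum_add (g h : ℕ → ℕ → ℕ) (n : ℕ) :
    binSum (fun k j => g k j + h k j) n = binSum g n + binSum h n := by
  simp [binSum, mul_add, Finset.sum_add_distrib]

/-- The weighted count of covers of an `m`-element set by two subsets: `c` elements lie in both,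
`k` only in the first and `j` only in the second, with weight `a (k + c) * b (j + c)`. -/
def coverProd (a b : ℕ → ℕ) (m : ℕ) : ℕ :=
  binSum (fun c => binSum fun k j => a (k + c) * b (j + c)) m

lemma coverProd_succ (a b : ℕ → ℕ) (m : ℕ) :
    coverProd a b (m + 1) = coverProd (fun i => a (i + 1)) b m +
      coverProd a (fun i => b (i + 1)) m +
      coverProd (fun i => a (i + 1)) (fun i => b (i + 1)) m := by
  unfold coverProd
  rw [binSum_succ]
  simp only [binSum_succ (fun k j => a (k + _) * b (j + _)), binSum_add, add_right_comm _ 1,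
    ← add_assoc]
  ring

lemma binSum_mul_binSum (m : ℕ) : ∀ a b : ℕ → ℕ,
    binSum (fun i _ => a i) m * binSum (fun i _ => b i) m =
      binSum (fun i _ => coverProd a b i) m := by
  induction m with
  | zero => intro a b; simp [binSum, coverProd]
  | succ m ih =>
    intro a b
    simp only [binSum_succ _ m, coverProd_succ, binSum_add, ← ih]
    ring

lemma coverProd_eq (a b : ℕ → ℕ) (m : ℕ) :
    coverProd a b m = ∑ c ∈ Finset.range (m + 1), ∑ k ∈ Finset.range (m - c + 1),
      m.choose c * (m - c).choose k * a (k + c) * b (m - k) := by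
  unfold coverProd binSum
  refine Finset.sum_congr rfl fun c hc => ?_
  rw [Finset.mul_sum]
  refine Finset.sum_congr rfl fun k hk => ?_
  rw [Finset.mem_range] at hc hk
  beta_reduce
  rw [show m - c - k + c = m - k by omega]
  ring

lemma f_succ (n m : ℕ) :
    f (n + 1) m = f n m + f n (m + 1) +
      ∑ p ∈ Finset.range (n + 1), coverProd (f p) (f (n - p)) m := by
  simp only [coverProd_eq]
  rw [f, Finset.sum_attach (Finset.range (n + 1)) fun p =>
    ∑ c ∈ Finset.range (m + 1), ∑ k ∈ Finset.range (m - c + 1),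
      m.choose c * (m - c).choose k * f p (k + c) * f (n - p) (m - k)]

lemma binSum_sum (s : Finset ℕ) (g : ℕ → ℕ → ℕ) (m : ℕ) :
    binSum (fun i _ => ∑ p ∈ s, g p i) m = ∑ p ∈ s, binSum (fun i _ => g p i) m := by
  simp only [binSum, Finset.mul_sum]
  exact Finset.sum_comm

lemma T_eq_binSum (n : ℕ) : ∀ m, T n m = binSum (fun i _ => f n i) m := by
  induction n using Nat.strong_induction_on with
  | _ n ih =>
    intro m
    cases n with
    | zero =>
      simp only [T, f, binSum, mul_ite, mul_one, mul_zero, Finset.sum_ite_eq', Finset.mem_range,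
        Nat.choose_one_right]
      split_ifs <;> omega
    | succ n =>
      simp only [f_succ, binSum_add, binSum_sum, ← binSum_mul_binSum]
      rw [T_succ, ih n n.lt_succ_self, binSum_succ]
      congr 1
      refine Finset.sum_congr rfl fun p hp => ?_
      rw [ih p (Finset.mem_range.mp hp), ih (n - p) (by omega)]

/-- `T n m = ∑_{i=0}^{m} C(m,i) * f n i`. -/
theorem T_eq_sum_f (n m : ℕ) :
    T n m = ∑ i ∈ Finset.range (m+1), Nat.choose m i * f n i := by
  exact T_eq_binSum n m
end

section
/- For all natural numbers n, i and every natural number j ≥ 1, the generalized binomial coefficient of the integer n−j over i satisfies: choose(n−j, i) = ∑_{k=0}^{i} (−1)^k·C(n, i−k)·C(k+j−1, j−1), where C(a,b) is the ordinary binomial coefficient of naturals and choose(x, i) for an integer x is the generalized binomial coefficient x(x−1)⋯(x−i+1)/i!. -/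
/-!
Write `n - j = (-j) + n` and apply the Chu–Vandermonde identity `Ring.add_choose_eq`. The negative
upper index is removed by reflection, `choose (-j) k = (-1)^k * C(j + k - 1, k)` (`Ring.choose_neg`),
and `C(j + k - 1, k) = C(k + j - 1, j - 1)` by the symmetry of binomial coefficients.
-/

/-- Reflection of a negative upper index; the shift `j = m + 1` avoids truncated subtraction. -/
lemma choose_neg_natCast_succ (m k : ℕ) :
    Ring.choose (-((m + 1 : ℕ) : ℤ)) k = (-1) ^ k * (Nat.choose (k + m) m : ℤ) := by
  have h : ((m + 1 : ℕ) : ℤ) + k - 1 = ((k + m : ℕ) : ℤ) := by push_cast; ring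
  rw [Ring.choose_neg, h, Ring.choose_natCast, Nat.choose_symm_add, Units.smul_def,
    smul_eq_mul, Int.coe_negOnePow_natCast]

/-- The generalized binomial coefficient identity
`choose (n - j) i = ∑_{k=0}^{i} (-1)^k * C(n, i-k) * C(k+j-1, j-1)`,
where `Ring.choose x i = x(x-1)⋯(x-i+1)/i!` is the generalized binomial
coefficient of the integer `x`. -/
theorem ring_choose_sub_eq (n i j : ℕ) (hj : 1 ≤ j) :
    Ring.choose ((n : ℤ) - (j : ℤ)) i =
      ∑ k ∈ Finset.range (i+1),
        (-1)^k * (Nat.choose n (i-k) : ℤ) * (Nat.choose (k+j-1) (j-1) : ℤ) := by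
  obtain ⟨m, rfl⟩ := Nat.exists_eq_add_of_le' hj
  rw [sub_eq_neg_add, Ring.add_choose_eq i (Commute.all _ _),
    Finset.Nat.sum_antidiagonal_eq_sum_range_succ_mk]
  refine Finset.sum_congr rfl fun k _ => ?_
  rw [choose_neg_natCast_succ, Ring.choose_natCast, ← Nat.add_assoc, Nat.add_sub_cancel,
    Nat.add_sub_cancel]
  ring
end
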